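/- Let T : X → X be a continuous map on a locally compact separable metrizable space and suppose the recurrent set R(T) is closed. Then every T-invariant Borel probability measure μ satisfies h_μ(T) = h_μ(T|_{R(T)}); consequently the topological entropy satisfies h(T) = h(T|_{R(T)}). -/

import Mathlib

open Set Filter Topology

/-- A map is proper if it is continuous and preimages of compact sets are compact. -/
def IsProper {X Y : Type*} [TopologicalSpace X] [TopologicalSpace Y] (f : X → Y) : Prop :=
  Continuous f ∧ ∀ K : Set Y, IsCompact K → IsCompact (f ⁻¹' K)

/-- An admissible covering: open, finite, covers, and each element has compact
closure or compact complement. -/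
def IsAdmissibleCover {X : Type*} [TopologicalSpace X] (α : Set (Set X)) : Prop :=
  α.Finite ∧ (∀ A ∈ α, IsOpen A) ∧ ⋃₀ α = univ ∧
    ∀ A ∈ α, IsCompact (closure A) ∨ IsCompact Aᶜ

/-- `coverIter T α n` is the collection of sets `A₀ ∩ T⁻¹ A₁ ∩ ⋯ ∩ T⁻⁽ⁿ⁻¹⁾ A_{n-1}`
with all `Aᵢ ∈ α`; the paper's `αⁿ` is `coverIter T α (n+1)`. -/
def coverIter {X : Type*} (T : X → X) (α : Set (Set X)) (n : ℕ) : Set (Set X) :=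
  {B | ∃ A : Fin n → Set X, (∀ i, A i ∈ α) ∧ B = ⋂ i : Fin n, T^[i.val] ⁻¹' A i}

/-- `coverNum β` is the minimal cardinality of a (finite) subcover of `β`. -/
noncomputable def coverNum {X : Type*} (β : Set (Set X)) : ℕ :=
  sInf {k | ∃ γ ⊆ β, γ.Finite ∧ ⋃₀ γ = univ ∧ γ.ncard = k}

/-- `h(T, α) = lim (1/n) log N(αⁿ)` (as a limsup, valued in `EReal`). -/
noncomputable def coverEntropyOf {X : Type*} (T : X → X) (α : Set (Set X)) : EReal :=
  Filter.limsup (fun n : ℕ => ((Real.log (coverNum (coverIter T α n)) / n : ℝ) : EReal)) Filter.atTop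

/-- The topological entropy `h(T)`, the supremum of `h(T, α)` over admissible coverings. -/
noncomputable def topEntropy {X : Type*} [TopologicalSpace X] (T : X → X) : EReal :=
  ⨆ (α : Set (Set X)) (_ : IsAdmissibleCover α), coverEntropyOf T α

open MeasureTheory

/-- A finite Borel (measurable) partition of the space. -/
def IsFinBorelPartition {X : Type*} [MeasurableSpace X] (𝒜 : Set (Set X)) : Prop :=
  𝒜.Finite ∧ (∀ A ∈ 𝒜, MeasurableSet A) ∧ 𝒜.PairwiseDisjoint id ∧ ⋃₀ 𝒜 = Set.univ

/-- The entropy `H(𝒜) = Σ_{B ∈ 𝒜} φ(μ(B))` with `φ(x) = -x log x`. -/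
noncomputable def partStatic {X : Type*} [MeasurableSpace X] (μ : Measure X)
    (𝒜 : Set (Set X)) : ℝ :=
  ∑ᶠ B ∈ 𝒜, Real.negMulLog (μ B).toReal

/-- `h(T, 𝒜) = lim (1/n) H(𝒜ⁿ)` (as a limsup), where `𝒜ⁿ` is the common refinement
`𝒜 ∨ T⁻¹𝒜 ∨ ⋯ ∨ T⁻⁽ⁿ⁻¹⁾𝒜 = coverIter T 𝒜 n`. -/
noncomputable def measPartEntropy {X : Type*} [MeasurableSpace X] (T : X → X)
    (μ : Measure X) (𝒜 : Set (Set X)) : EReal :=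
  Filter.limsup (fun n : ℕ => ((partStatic μ (coverIter T 𝒜 n) / n : ℝ) : EReal)) Filter.atTop

/-- The measure-theoretic (Kolmogorov–Sinai) entropy `h_μ(T)`, the supremum of
`h(T, 𝒜)` over all finite Borel partitions `𝒜`. -/
noncomputable def measEntropy {X : Type*} [MeasurableSpace X] (T : X → X)
    (μ : Measure X) : EReal :=
  ⨆ (𝒜 : Set (Set X)) (_ : IsFinBorelPartition 𝒜), measPartEntropy T μ 𝒜

/-- The recurrent set of `T`: points in their own ω-limit set. -/
def recurrentSet {X : Type*} [TopologicalSpace X] (T : X → X) : Set X :=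
  {x | MapClusterPt x Filter.atTop fun n => T^[n] x}


open scoped CompactlySupported

lemma exists_ultra_lim (a : ℕ → ℝ) (C : ℝ) (h : ∀ k, |a k| ≤ C) :
    ∃ L, Tendsto a (hyperfilter ℕ : Filter ℕ) (𝓝 L) := by
  have hc : IsCompact (Icc (-C) C) := isCompact_Icc
  obtain ⟨L, -, hL⟩ := hc.ultrafilter_le_nhds ((hyperfilter ℕ).map a) (by
    rw [Ultrafilter.coe_map, le_principal_iff]
    exact Filter.mem_map.2 (Filter.univ_mem' fun k => abs_le.1 (h k)))
  exact ⟨L, hL⟩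

lemma poincare_ae {X : Type*} [TopologicalSpace X] [SecondCountableTopology X]
    [MeasurableSpace X] [BorelSpace X] (T : X → X) (hT : Continuous T) (μ : Measure X)
    [IsFiniteMeasure μ] (hμ : μ.map T = μ) : μ (recurrentSet T)ᶜ = 0 := by
  have hc : Conservative T μ := MeasurePreserving.conservative ⟨hT.measurable, hμ⟩
  have := hc.ae_frequently_mem_of_mem_nhds
  rw [← mem_ae_iff]
  filter_upwards [this] with x hx
  exact mapClusterPt_iff_frequently.2 hx

lemma exists_cc {X : Type*} [TopologicalSpace X] [T2Space X]
    [LocallyCompactSpace X] {K V : Set X} (hK : IsCompact K) (hV : IsOpen V) (hKV : K ⊆ V) :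
    ∃ f : C_c(X, ℝ), (∀ x ∈ K, f x = 1) ∧ tsupport f ⊆ V ∧ ∀ x, 0 ≤ f x ∧ f x ≤ 1 := by
  obtain ⟨f, hf1, hf2, hf3, hf4⟩ :=
    exists_continuousMap_one_of_isCompact_subset_isOpen hK hV hKV
  exact ⟨⟨f, hf2⟩, fun x hx => hf1 hx, hf3, fun x => hf4 x⟩

open Classical in
lemma density_zero {X : Type*} [TopologicalSpace X] [T2Space X]
    [LocallyCompactSpace X] [SecondCountableTopology X]
    [MeasurableSpace X] [BorelSpace X]
    (T : X → X) (hT : Continuous T) (C : Set X) (hC : IsCompact C)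
    (hd : C ⊆ (recurrentSet T)ᶜ) (ε : ℝ) (hε : 0 < ε) :
    ∃ n₀ : ℕ, ∀ n ≥ n₀, ∀ x : X,
      ((({i ∈ Finset.range n | T^[i] x ∈ C} : Finset ℕ).card : ℕ) : ℝ) ≤ ε * n := by

  by_contra! hcon
  choose N hN x hx using fun k : ℕ => hcon (k + 1)
  have hNpos : ∀ k, (0:ℝ) < N k := fun k => by
    have := hN k
    exact_mod_cast (by omega : 0 < N k)
  let A : (X → ℝ) → ℕ → ℝ := fun f k => (∑ i ∈ Finset.range (N k), f (T^[i] (x k))) / N k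
  have Abd : ∀ (f : X → ℝ) (B : ℝ), (∀ y, |f y| ≤ B) → ∀ k, |A f k| ≤ B := by
    intro f B hB k
    simp only [A]
    rw [abs_div, abs_of_pos (hNpos k), div_le_iff₀ (hNpos k)]
    refine (Finset.abs_sum_le_sum_abs _ _).trans ?_
    refine (Finset.sum_le_sum fun i _ => hB _).trans ?_
    simp [mul_comm]
  have Amono : ∀ (f g : X → ℝ), (∀ y, f y ≤ g y) → ∀ k, A f k ≤ A g k := by
    intro f g h k
    exact div_le_div_of_nonneg_right (Finset.sum_le_sum fun i _ => h _) (hNpos k).le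
  have hbd : ∀ f : C_c(X, ℝ), ∃ B, ∀ y, |f y| ≤ B := fun f => by
    obtain ⟨B, hB⟩ := f.hasCompactSupport.exists_bound_of_continuous f.continuous
    exact ⟨B, hB⟩
  have hlim : ∀ f : C_c(X, ℝ), ∃ L, Tendsto (A f) (hyperfilter ℕ : Filter ℕ) (𝓝 L) := fun f => by
    obtain ⟨B, hB⟩ := hbd f
    exact exists_ultra_lim _ B (Abd f B hB)
  choose L hL using hlim
  let Λ₀ : C_c(X, ℝ) →ₗ[ℝ] ℝ :=
    { toFun := L
      map_add' := fun f g => by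
        refine tendsto_nhds_unique (hL (f + g)) (((hL f).add (hL g)).congr fun k => ?_)
        simp [A, Finset.sum_add_distrib, add_div]
      map_smul' := fun c f => by
        refine tendsto_nhds_unique (hL (c • f)) (((hL f).const_mul c).congr fun k => ?_)
        simp [A, ← Finset.mul_sum, mul_div_assoc] }
  let Λ : C_c(X, ℝ) →ₚ[ℝ] ℝ := PositiveLinearMap.mk₀ Λ₀ (fun f hf => by
    refine ge_of_tendsto (hL f) (Filter.Eventually.of_forall fun k => ?_)
    have := Amono 0 f (fun y => hf y) k
    simpa [A] using this)
  have hΛ : ∀ f, Λ f = L f := fun f => rfl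
  set μ := RealRMK.rieszMeasure Λ with hμdef
  have hle1 : ∀ K : Set X, IsCompact K → μ K ≤ 1 := by
    intro K hK
    obtain ⟨f, hf1, -, hf4⟩ :=
      exists_cc hK isOpen_univ K.subset_univ
    refine (RealRMK.rieszMeasure_le_of_eq_one (f := f) Λ
      (fun x ↦ (hf4 x).1) hK hf1).trans ?_
    rw [ENNReal.ofReal_le_one, hΛ]
    refine le_of_tendsto (hL _) (Filter.Eventually.of_forall fun k => ?_)
    exact (le_abs_self _).trans (Abd _ 1 (fun y => by
      have := hf4 y
      rw [abs_of_nonneg this.1]; exact this.2) k)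
  have : IsFiniteMeasure μ := by
    refine ⟨lt_of_le_of_lt ?_ ENNReal.one_lt_top⟩
    rw [isOpen_univ.measure_eq_iSup_isCompact]
    exact iSup_le fun K => iSup_le fun _ => iSup_le fun hK => hle1 K hK
  have hopen : ∀ V : Set X, IsOpen V → μ (T ⁻¹' V) ≤ μ V := by
    intro V hV
    rw [(hV.preimage hT).measure_eq_iSup_isCompact]
    refine iSup_le fun K => iSup_le fun hKV => iSup_le fun hK => ?_
    obtain ⟨f, hf1, hf3, hf4⟩ :=
      exists_cc (hK.image hT) hV
        (image_subset_iff.2 hKV)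
    obtain ⟨g, hg1, -, hg4⟩ :=
      exists_cc hK isOpen_univ K.subset_univ
    let g' : C_c(X, ℝ) := ⟨⟨fun y => g y * f (T y), by fun_prop⟩, g.hasCompactSupport.mul_right⟩
    have hg'apply : ∀ y, g' y = g y * f (T y) := fun y => rfl
    have e1 : μ K ≤ ENNReal.ofReal (Λ g') := by
      refine RealRMK.rieszMeasure_le_of_eq_one Λ
        (fun y => mul_nonneg (hg4 y).1 (hf4 _).1) hK (fun y hy => ?_)
      rw [hg'apply, hg1 y hy, hf1 _ (mem_image_of_mem T hy)]; simp
    have e2 : ENNReal.ofReal (Λ f) ≤ μ V :=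
      RealRMK.le_rieszMeasure_tsupport_subset Λ hf4 hf3
    refine e1.trans (le_trans (ENNReal.ofReal_le_ofReal ?_) e2)
    rw [hΛ, hΛ]
    have hinv : Tendsto (fun k => A f k + 1 / ((k : ℝ) + 1))
        (hyperfilter ℕ : Filter ℕ) (𝓝 (L f + 0)) := by
      refine (hL f).add ?_
      exact (tendsto_one_div_add_atTop_nhds_zero_nat (𝕜 := ℝ)).mono_left
        (by rw [← Nat.cofinite_eq_atTop]; exact hyperfilter_le_cofinite)
    rw [add_zero] at hinv
    refine le_of_tendsto_of_tendsto' (hL g') hinv fun k => ?_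
    have h1 : A g' k ≤ A (fun y => f (T y)) k := by
      refine Amono g' (fun y => f (T y)) (fun y => ?_) k
      rw [hg'apply]
      exact mul_le_of_le_one_left (hf4 _).1 (hg4 y).2
    refine h1.trans ?_
    have h2 : ∑ i ∈ Finset.range (N k), f (T (T^[i] (x k)))
        ≤ ∑ i ∈ Finset.range (N k), f (T^[i] (x k)) + 1 := by
      have e := Finset.sum_range_succ (fun i => f (T^[i] (x k))) (N k)
      rw [Finset.sum_range_succ'] at e
      simp only [Function.iterate_succ_apply', Function.iterate_zero, id] at e
      have := (hf4 (x k)).1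
      have := (hf4 (T^[N k] (x k))).2
      linarith
    have h3 : A (fun y => f (T y)) k ≤ A f k + 1 / N k := by
      simp only [A]
      rw [← add_div]
      exact div_le_div_of_nonneg_right h2 (hNpos k).le
    refine h3.trans (add_le_add le_rfl ?_)
    apply one_div_le_one_div_of_le (by positivity)
    exact_mod_cast hN k
  have hmeas : ∀ S : Set X, MeasurableSet S → μ (T ⁻¹' S) ≤ μ S := by
    intro S hS
    rw [S.measure_eq_iInf_isOpen μ]
    refine le_iInf fun V => le_iInf fun hSV => le_iInf fun hV => ?_
    exact (measure_mono (preimage_mono hSV)).trans (hopen V hV)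
  have hinv : μ.map T = μ := by
    ext S hS
    rw [Measure.map_apply hT.measurable hS]
    refine le_antisymm (hmeas S hS) ?_
    have h1 := hmeas _ hS.compl
    have h2 := measure_add_measure_compl (μ := μ) hS
    have h3 := measure_add_measure_compl (μ := μ) (hT.measurable hS)
    rw [preimage_compl] at h1
    have h4 : μ S + μ Sᶜ ≤ μ (T ⁻¹' S) + μ Sᶜ := by
      rw [h2, ← h3]; gcongr
    exact (ENNReal.add_le_add_iff_right (measure_ne_top _ _)).1 h4
  have hz : μ C = 0 := measure_mono_null hd (poincare_ae T hT μ hinv)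
  obtain ⟨V, hCV, hV, hVε⟩ := C.exists_isOpen_lt_of_lt (μ := μ) (ENNReal.ofReal ε)
    (by rw [hz]; exact ENNReal.ofReal_pos.2 hε)
  obtain ⟨f, hf1, hf3, hf4⟩ :=
      exists_cc hC hV hCV
  have e2 : ENNReal.ofReal (Λ f) ≤ μ V :=
    RealRMK.le_rieszMeasure_tsupport_subset Λ hf4 hf3
  have e3 : ε ≤ Λ f := by
    rw [hΛ]
    refine ge_of_tendsto (hL _) (Filter.Eventually.of_forall fun k => ?_)
    simp only [A]
    rw [le_div_iff₀ (hNpos k)]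
    refine (hx k).le.trans ?_
    rw [Finset.card_eq_sum_ones, Nat.cast_sum, Finset.sum_filter]
    refine Finset.sum_le_sum fun i _ => ?_
    split_ifs with h
    · rw [hf1 _ h]; simp
    · exact (hf4 _).1
  exact absurd (lt_of_le_of_lt ((ENNReal.ofReal_le_ofReal e3).trans e2) hVε) (lt_irrefl _)

/-- The set `S` is covered by at most `c` cylinders of length `n` given by words over `α`. -/
def Cov {X : Type*} (T : X → X) (α : Set (Set X)) (S : Set X) (n : ℕ) (c : ℝ) : Prop :=
  ∃ W : Finset (ℕ → Set X), (∀ w ∈ W, ∀ i, w i ∈ α) ∧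
    (∀ x ∈ S, ∃ w ∈ W, ∀ i < n, T^[i] x ∈ w i) ∧ (W.card : ℝ) ≤ c

lemma Cov.mono {X : Type*} {T : X → X} {α : Set (Set X)} {S S' : Set X} {n : ℕ} {c c' : ℝ}
    (h : Cov T α S n c) (hS : S' ⊆ S) (hc : c ≤ c') : Cov T α S' n c' := by
  obtain ⟨W, h1, h2, h3⟩ := h
  exact ⟨W, h1, fun x hx => h2 x (hS hx), h3.trans hc⟩

lemma Cov.union {X : Type*} {T : X → X} {α : Set (Set X)} {S S' : Set X} {n : ℕ} {c c' : ℝ}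
    (h : Cov T α S n c) (h' : Cov T α S' n c') : Cov T α (S ∪ S') n (c + c') := by
  classical
  obtain ⟨W, h1, h2, h3⟩ := h
  obtain ⟨W', h1', h2', h3'⟩ := h'
  refine ⟨W ∪ W', fun w hw => ?_, ?_, ?_⟩
  · rcases Finset.mem_union.1 hw with hw | hw
    · exact h1 w hw
    · exact h1' w hw
  · rintro x (hx | hx)
    · obtain ⟨w, hw, hh⟩ := h2 x hx
      exact ⟨w, Finset.mem_union_left _ hw, hh⟩
    · obtain ⟨w, hw, hh⟩ := h2' x hx
      exact ⟨w, Finset.mem_union_right _ hw, hh⟩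
  · have : ((W ∪ W').card : ℝ) ≤ W.card + W'.card := by exact_mod_cast Finset.card_union_le _ _
    linarith

lemma Cov.concat {X : Type*} {T : X → X} {α : Set (Set X)} {S S' P : Set X} {m n' n : ℕ}
    {c c' : ℝ} (h : Cov T α S m c) (h' : Cov T α S' n' c')
    (hP : ∀ x ∈ P, x ∈ S ∧ T^[m] x ∈ S') (hn : n ≤ m + n') : Cov T α P n (c * c') := by
  classical
  obtain ⟨W, h1, h2, h3⟩ := h
  obtain ⟨W', h1', h2', h3'⟩ := h'
  refine ⟨(W ×ˢ W').image (fun p => fun i => if i < m then p.1 i else p.2 (i - m)),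
    fun w hw => ?_, ?_, ?_⟩
  · obtain ⟨p, hp, rfl⟩ := Finset.mem_image.1 hw
    rw [Finset.mem_product] at hp
    intro i
    dsimp only
    split_ifs
    · exact h1 _ hp.1 _
    · exact h1' _ hp.2 _
  · intro x hx
    obtain ⟨w, hw, hh⟩ := h2 x (hP x hx).1
    obtain ⟨w', hw', hh'⟩ := h2' _ (hP x hx).2
    refine ⟨_, Finset.mem_image_of_mem _ (Finset.mk_mem_product hw hw'), fun i hi => ?_⟩
    dsimp only
    split_ifs with him
    · exact hh i him
    · have := hh' (i - m) (by omega)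
      rw [← Function.iterate_add_apply] at this
      rwa [Nat.sub_add_cancel (not_lt.1 him)] at this
  · refine le_trans (Nat.cast_le.2 Finset.card_image_le) ?_
    rw [Finset.card_product, Nat.cast_mul]
    exact mul_le_mul h3 h3' (by positivity) ((Nat.cast_nonneg _).trans h3)

lemma coverNum_le_of_cov {X : Type*} {T : X → X} {α : Set (Set X)} {n : ℕ} {c : ℝ}
    (h : Cov T α univ n c) : (coverNum (coverIter T α n) : ℝ) ≤ c := by
  classical
  obtain ⟨W, h1, h2, h3⟩ := h
  let g : (ℕ → Set X) → Set X := fun w => ⋂ i : Fin n, T^[i.val] ⁻¹' w i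
  have : coverNum (coverIter T α n) ≤ (g '' (W : Set (ℕ → Set X))).ncard := by
    refine Nat.sInf_le ⟨g '' W, ?_, W.finite_toSet.image g, ?_, rfl⟩
    · rintro _ ⟨w, hw, rfl⟩
      exact ⟨fun i => w i, fun i => h1 w hw i, rfl⟩
    · refine eq_univ_of_forall fun x => ?_
      obtain ⟨w, hw, hh⟩ := h2 x (mem_univ _)
      exact ⟨_, mem_image_of_mem g hw, mem_iInter.2 fun i => hh i i.2⟩
  have h4 := this.trans (ncard_image_le W.finite_toSet)
  rw [ncard_coe_finset] at h4
  exact (Nat.cast_le.2 h4).trans h3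

lemma cov_coverNum {X : Type*} (T : X → X) {α : Set (Set X)} (n : ℕ) (hf : α.Finite)
    (hne : α.Nonempty) (hc : ⋃₀ α = univ) :
    Cov T α univ n (coverNum (coverIter T α n)) := by
  classical
  obtain ⟨a₀, ha₀⟩ := hne
  have hfin : (coverIter T α n).Finite := by
    refine ((Set.Finite.pi' (fun _ : Fin n => hf)).image
      (fun A => ⋂ i : Fin n, T^[i.val] ⁻¹' A i)).subset ?_
    rintro _ ⟨A, hA, rfl⟩
    exact ⟨A, hA, rfl⟩
  have hne : {k | ∃ γ ⊆ coverIter T α n, γ.Finite ∧ ⋃₀ γ = univ ∧ γ.ncard = k}.Nonempty := by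
    refine ⟨_, coverIter T α n, subset_rfl, hfin, ?_, rfl⟩
    refine eq_univ_of_forall fun x => ?_
    have : ∀ y : X, ∃ A ∈ α, y ∈ A := fun y => by
      have : y ∈ ⋃₀ α := hc ▸ mem_univ y
      simpa using this
    choose A hA hA' using this
    exact ⟨_, ⟨fun i => A (T^[i.val] x), fun i => hA _, rfl⟩,
      mem_iInter.2 fun i => hA' _⟩
  obtain ⟨γ, hγ, hγf, hγc, hγn⟩ := Nat.sInf_mem hne
  change γ.ncard = coverNum _ at hγn
  have : ∀ B : Set X, ∃ w : ℕ → Set X, (∀ i, w i ∈ α) ∧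
      (B ∈ γ → B = ⋂ i : Fin n, T^[i.val] ⁻¹' w i) := by
    intro B
    by_cases hB : B ∈ γ
    · obtain ⟨A, hA, hBA⟩ := hγ hB
      refine ⟨fun i => if h : i < n then A ⟨i, h⟩ else a₀, fun i => ?_, fun _ => ?_⟩
      · dsimp only; split_ifs
        · exact hA _
        · exact ha₀
      · rw [hBA]; simp
    · exact ⟨fun _ => a₀, fun _ => ha₀, fun h => absurd h hB⟩
  choose w hw hw' using this
  refine ⟨hγf.toFinset.image w, ?_, ?_, ?_⟩
  · intro v hv
    obtain ⟨B, -, rfl⟩ := Finset.mem_image.1 hv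
    exact hw B
  · intro x _
    have : x ∈ ⋃₀ γ := hγc ▸ mem_univ x
    obtain ⟨B, hB, hx⟩ := this
    refine ⟨w B, Finset.mem_image_of_mem _ (hγf.mem_toFinset.2 hB), fun i hi => ?_⟩
    rw [hw' B hB] at hx
    exact mem_iInter.1 hx ⟨i, hi⟩
  · rw [← hγn, ncard_eq_toFinset_card γ hγf]
    exact Nat.cast_le.2 Finset.card_image_le

lemma restrict_iterate_val {X : Type*} (T : X → X) (R : Set X) (hM : MapsTo T R R) (n : ℕ)
    (y : R) : (((hM.restrict T R R)^[n] y : R) : X) = T^[n] y := by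
  induction n with
  | zero => rfl
  | succ n ih => simp only [Function.iterate_succ_apply', ← ih]; rfl

lemma Cov.of_restrict {X : Type*} {T : X → X} {R : Set X} (hM : MapsTo T R R)
    {β : Set (Set R)} {α : Set (Set X)} {n : ℕ} {c : ℝ}
    (h : Cov (hM.restrict T R R) β univ n c) (e : Set R → Set X)
    (he : ∀ B ∈ β, e B ∈ α ∧ B ⊆ Subtype.val ⁻¹' e B) : Cov T α R n c := by
  classical
  obtain ⟨W, h1, h2, h3⟩ := h
  refine ⟨W.image (fun w i => e (w i)), ?_, ?_,
    le_trans (Nat.cast_le.2 Finset.card_image_le) h3⟩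
  · intro v hv
    obtain ⟨w, hw, rfl⟩ := Finset.mem_image.1 hv
    exact fun i => (he _ (h1 w hw i)).1
  · intro x hx
    obtain ⟨w, hw, hh⟩ := h2 ⟨x, hx⟩ (mem_univ _)
    refine ⟨_, Finset.mem_image_of_mem _ hw, fun i hi => ?_⟩
    have := (he _ (h1 w hw i)).2 (hh i hi)
    rwa [mem_preimage, restrict_iterate_val] at this

lemma Cov.restrict {X : Type*} {T : X → X} {R : Set X} (hM : MapsTo T R R)
    {β : Set (Set R)} {α : Set (Set X)} {n : ℕ} {c : ℝ}
    (h : Cov T α univ n c) (e : Set X → Set R)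
    (he : ∀ A ∈ α, e A ∈ β ∧ Subtype.val ⁻¹' A ⊆ e A) :
    Cov (hM.restrict T R R) β univ n c := by
  classical
  obtain ⟨W, h1, h2, h3⟩ := h
  refine ⟨W.image (fun w i => e (w i)), ?_, ?_,
    le_trans (Nat.cast_le.2 Finset.card_image_le) h3⟩
  · intro v hv
    obtain ⟨w, hw, rfl⟩ := Finset.mem_image.1 hv
    exact fun i => (he _ (h1 w hw i)).1
  · intro x hx
    obtain ⟨w, hw, hh⟩ := h2 x (mem_univ _)
    refine ⟨_, Finset.mem_image_of_mem _ hw, fun i hi => ?_⟩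
    apply (he _ (h1 w hw i)).2
    rw [mem_preimage, restrict_iterate_val]
    exact hh i hi

lemma cov_single {X : Type*} (T : X → X) {α : Set (Set X)} {A : Set X} (hA : A ∈ α) :
    Cov T α A 1 1 := by
  refine ⟨{fun _ => A}, by simpa using hA, fun x hx => ⟨_, Finset.mem_singleton_self _, ?_⟩, by simp⟩
  intro i hi
  obtain rfl : i = 0 := by omega
  exact hx

lemma cov_one {X : Type*} (T : X → X) {α : Set (Set X)} (hf : α.Finite)
    (hc : ⋃₀ α = univ) : Cov T α univ 1 α.ncard := by
  classical
  refine ⟨hf.toFinset.image (fun A _ => A), ?_, ?_, ?_⟩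
  · intro v hv
    obtain ⟨w, hw, rfl⟩ := Finset.mem_image.1 hv
    exact fun i => hf.mem_toFinset.1 hw
  · intro x _
    have : x ∈ ⋃₀ α := hc ▸ mem_univ x
    obtain ⟨A, hA, hx⟩ := this
    refine ⟨_, Finset.mem_image_of_mem _ (hf.mem_toFinset.2 hA), fun i hi => ?_⟩
    obtain rfl : i = 0 := by omega
    exact hx
  · rw [ncard_eq_toFinset_card α hf]
    exact Nat.cast_le.2 Finset.card_image_le

open Classical in
lemma cov_rec {X : Type*} (T : X → X) {α : Set (Set X)} (hf : α.Finite)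
    (hc : ⋃₀ α = univ) (m : ℕ) (U C A : Set X) (N l M : ℝ)
    (hU : Cov T α U (m + 1) N) (hA : A ∈ α)
    (hcov : ∀ x, x ∈ U ∨ x ∈ C ∨ x ∈ A) (hl : 1 ≤ l) (hM : 1 ≤ M)
    (hineq : N + l ^ m + α.ncard * l ^ m / M ≤ l ^ (m + 1)) (j : ℕ) :
    ∀ b : ℕ, Cov T α {x | Nat.count (fun i => T^[i] x ∈ C) (j - (m + 1)) ≤ b} (j - (m + 1))
      (l ^ j * M ^ b) := by
  induction j using Nat.strong_induction_on with
  | _ j ih =>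
    intro b
    rcases Nat.lt_or_ge (m + 1) j with hj | hj
    · obtain ⟨n, rfl⟩ : ∃ n, j = n + 1 + (m + 1) := ⟨j - (m + 1) - 1, by omega⟩
      have e0 : n + 1 + (m + 1) - (m + 1) = n + 1 := by omega
      rw [e0]
      have c1 := (Cov.concat (n := n + 1)
        (P := {x | Nat.count (fun i => T^[i] x ∈ C) (n + 1) ≤ b} ∩ U)
        hU (ih (n + 1) (by omega) b) (by
        rintro x ⟨hx, hxU⟩
        refine ⟨hxU, ?_⟩
        simp only [mem_ofPred_eq] at hx ⊢
        rcases Nat.lt_or_ge (n + 1) (m + 1) with h | h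
        · rw [Nat.sub_eq_zero_of_le h.le, Nat.count_zero]; exact Nat.zero_le _
        · refine le_trans ?_ hx
          conv_rhs => rw [← Nat.add_sub_cancel' h, Nat.count_add]
          simp only [← Function.iterate_add_apply, Nat.add_comm]
          exact Nat.le_add_left _ _) (by omega))
      have c2 := (Cov.concat (n := n + 1)
        (P := {x | Nat.count (fun i => T^[i] x ∈ C) (n + 1) ≤ b} ∩ A)
        (cov_single T hA) (ih (n + (m + 1)) (by omega) b) (by
        rintro x ⟨hx, hxA⟩
        refine ⟨hxA, ?_⟩
        simp only [mem_ofPred_eq, Nat.add_sub_cancel] at hx ⊢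
        refine le_trans ?_ hx
        rw [Nat.add_comm n 1, Nat.count_add]
        simp only [← Function.iterate_add_apply, Nat.add_comm]
        exact Nat.le_add_left _ _) (by omega))
      have c3 : Cov T α ({x | Nat.count (fun i => T^[i] x ∈ C) (n + 1) ≤ b} ∩ C) (n + 1)
          (α.ncard * l ^ (n + (m + 1)) / M * M ^ b) := by
        rcases b with _ | b
        · refine ⟨∅, by simp, ?_, ?_⟩
          · rintro x ⟨hx, hxC⟩
            simp only [mem_ofPred_eq] at hx
            rw [Nat.add_comm n 1, Nat.count_add] at hx
            simp [Nat.count_succ, hxC] at hx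
          · simp; positivity
        · have := (Cov.concat (n := n + 1)
            (P := {x | Nat.count (fun i => T^[i] x ∈ C) (n + 1) ≤ b + 1} ∩ C)
            (cov_one T hf hc) (ih (n + (m + 1)) (by omega) b) (by
            rintro x ⟨hx, hxC⟩
            refine ⟨mem_univ _, ?_⟩
            simp only [mem_ofPred_eq, Nat.add_sub_cancel] at hx ⊢
            rw [Nat.add_comm n 1, Nat.count_add] at hx
            have h1 : Nat.count (fun i => T^[i] x ∈ C) 1 = 1 := by
              simp [Nat.count_succ, hxC]
            rw [h1] at hx
            simp only [← Function.iterate_add_apply]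
            simp only [Nat.add_comm] at hx ⊢
            omega) (by omega))
          refine this.mono subset_rfl (le_of_eq ?_)
          have : M ≠ 0 := by positivity
          field_simp
          ring
      refine ((c1.union c2).union c3).mono ?_ ?_
      · intro x hx
        rcases hcov x with h | h | h
        · exact Or.inl (Or.inl ⟨hx, h⟩)
        · exact Or.inr ⟨hx, h⟩
        · exact Or.inl (Or.inr ⟨hx, h⟩)
      · have hp : 0 ≤ l ^ (n + 1) * M ^ b := by positivity
        have := mul_le_mul_of_nonneg_right hineq hp
        calc _ = (N + l ^ m + α.ncard * l ^ m / M) * (l ^ (n + 1) * M ^ b) := by ring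
          _ ≤ _ := this
          _ = _ := by ring
    · refine ⟨{fun _ => A}, by simpa using hA,
        fun x _ => ⟨_, Finset.mem_singleton_self _, fun i hi => by omega⟩, ?_⟩
      have h1 : 1 ≤ l ^ j := one_le_pow₀ hl
      have h2 : 1 ≤ M ^ b := one_le_pow₀ hM
      simpa using one_le_mul_of_one_le_of_one_le h1 h2

lemma log_nat_mono {a b : ℕ} (h : a ≤ b) : Real.log a ≤ Real.log b := by
  rcases Nat.eq_zero_or_pos a with rfl | ha
  · simpa using Real.log_natCast_nonneg b
  · exact Real.log_le_log (by exact_mod_cast ha) (by exact_mod_cast h)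

lemma coverEntropyOf_nonneg {X : Type*} (T : X → X) (α : Set (Set X)) :
    0 ≤ coverEntropyOf T α := by
  refine le_limsup_of_frequently_le (Frequently.of_forall fun n => ?_) (by isBoundedDefault)
  have : 0 ≤ Real.log (coverNum (coverIter T α n)) / n :=
    div_nonneg (Real.log_natCast_nonneg _) (Nat.cast_nonneg _)
  exact_mod_cast this

lemma coverEntropyOf_le_of_le {X Y : Type*} (T : X → X) (α : Set (Set X)) (S : Y → Y)
    (β : Set (Set Y)) (h : ∀ n, coverNum (coverIter T α n) ≤ coverNum (coverIter S β n)) :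
    coverEntropyOf T α ≤ coverEntropyOf S β := by
  refine limsup_le_limsup (Eventually.of_forall fun n => ?_)
    (by isBoundedDefault) (by isBoundedDefault)
  have : Real.log (coverNum (coverIter T α n)) / n ≤ Real.log (coverNum (coverIter S β n)) / n :=
    div_le_div_of_nonneg_right (log_nat_mono (h n)) (Nat.cast_nonneg _)
  exact EReal.coe_le_coe_iff.2 this

lemma exists_compact_end {X : Type*} [TopologicalSpace X] [Nonempty X] {α : Set (Set X)}
    (hα : IsAdmissibleCover α) : ∃ A ∈ α, ∃ K : Set X, IsCompact K ∧ Kᶜ ⊆ A := by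
  by_cases h : ∃ A ∈ α, IsCompact Aᶜ
  · obtain ⟨A, hA, hK⟩ := h
    exact ⟨A, hA, Aᶜ, hK, by simp⟩
  · push Not at h
    have hcl : ∀ A ∈ α, IsCompact (closure A) := fun A hA =>
      (hα.2.2.2 A hA).resolve_right (h A hA)
    have hK := hα.1.isCompact_biUnion hcl
    obtain ⟨x⟩ := ‹Nonempty X›
    have hx : x ∈ ⋃₀ α := hα.2.2.1 ▸ mem_univ x
    obtain ⟨A, hA, -⟩ := hx
    refine ⟨A, hA, _, hK, fun y hy => ?_⟩
    have hy' : y ∈ ⋃₀ α := hα.2.2.1 ▸ mem_univ y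
    obtain ⟨B, hB, hyB⟩ := hy'
    exact absurd (mem_biUnion hB (subset_closure hyB)) hy

open Classical in
lemma coverEntropy_upper {X : Type*} [TopologicalSpace X] [T2Space X] [Nonempty X]
    [LocallyCompactSpace X] [SecondCountableTopology X]
    [MeasurableSpace X] [BorelSpace X]
    (T : X → X) (hT : Continuous T) (hM : MapsTo T (recurrentSet T) (recurrentSet T))
    (α : Set (Set X)) (hα : IsAdmissibleCover α) :
    coverEntropyOf T α ≤ coverEntropyOf (hM.restrict T _ _)
      ((fun A => (Subtype.val ⁻¹' A : Set (recurrentSet T))) '' α) := by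
  set β := (fun A => (Subtype.val ⁻¹' A : Set (recurrentSet T))) '' α with hβ
  set TR := hM.restrict T _ _ with hTR
  obtain ⟨A, hA, K, hK, hKA⟩ := exists_compact_end hα
  have hβf : β.Finite := hα.1.image _
  have hβne : β.Nonempty := ⟨_, mem_image_of_mem _ hA⟩
  have hβc : ⋃₀ β = univ := by
    refine eq_univ_of_forall fun y => ?_
    have hy' : (y : X) ∈ ⋃₀ α := hα.2.2.1 ▸ mem_univ _
    obtain ⟨B, hB, hyB⟩ := hy'
    exact ⟨_, mem_image_of_mem _ hB, hyB⟩
  refine EReal.le_of_forall_lt_iff_le.1 fun s hs => ?_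
  obtain ⟨t, ht1, ht2⟩ := EReal.lt_iff_exists_real_btwn.1 hs
  have ht0 : 0 < t := by exact_mod_cast (coverEntropyOf_nonneg TR β).trans_lt ht1
  have hts : t < s := by exact_mod_cast ht2
  set r := (t + s) / 2 with hr
  have htr : t < r := by rw [hr]; linarith
  have hrs : r < s := by rw [hr]; linarith
  have hev := eventually_lt_of_limsup_lt ht1 (by isBoundedDefault)
  -- choose the block length
  have hlim : Tendsto (fun m : ℕ => Real.exp (t - r) ^ m + Real.exp (-r)) atTop
      (𝓝 (0 + Real.exp (-r))) :=
    (tendsto_pow_atTop_nhds_zero_of_lt_one (Real.exp_nonneg _)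
      (by rw [Real.exp_lt_one_iff]; linarith)).add_const _
  have hlt : 0 + Real.exp (-r) < 1 := by
    rw [zero_add, Real.exp_lt_one_iff]; linarith
  obtain ⟨m', hm1, hm2, hm3⟩ :=
    (hev.and ((hlim.eventually_lt_const hlt).and (eventually_ge_atTop 1))).exists
  obtain ⟨m, rfl⟩ : ∃ m, m' = m + 1 := ⟨m' - 1, by omega⟩
  set N := coverNum (coverIter TR β (m + 1)) with hN
  have hNle : (N : ℝ) ≤ Real.exp (t * (m + 1 : ℕ)) := by
    have h1 : Real.log N / (m + 1 : ℕ) < t := by exact_mod_cast hm1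
    rw [div_lt_iff₀ (by positivity)] at h1
    rcases Nat.eq_zero_or_pos N with h0 | h0
    · rw [h0]; simpa using Real.exp_nonneg _
    · exact (Real.log_le_iff_le_exp (by exact_mod_cast h0)).1 h1.le
  set l := Real.exp r with hl
  have hl1 : 1 ≤ l := Real.one_le_exp (by linarith)
  have hl0 : 0 < l := Real.exp_pos _
  have hNl : (N : ℝ) + l ^ m < l ^ (m + 1) := by
    have h1 : l ^ (m + 1) * (Real.exp (t - r) ^ (m + 1) + Real.exp (-r)) < l ^ (m + 1) * 1 :=
      mul_lt_mul_of_pos_left hm2 (by positivity)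
    have h2 : l ^ (m + 1) * Real.exp (t - r) ^ (m + 1) = Real.exp (t * (m + 1 : ℕ)) := by
      rw [← mul_pow, hl, ← Real.exp_add, ← Real.exp_nat_mul]; congr 1; ring
    have h3 : l ^ (m + 1) * Real.exp (-r) = l ^ m := by
      rw [pow_succ, mul_assoc, hl, ← Real.exp_add]; simp
    rw [mul_add, h2, h3, mul_one] at h1
    linarith
  set gap := l ^ (m + 1) - (N + l ^ m) with hgap
  have hgap0 : 0 < gap := by rw [hgap]; linarith
  set M := max 1 (α.ncard * l ^ m / gap) with hMdef
  have hM1 : 1 ≤ M := le_max_left _ _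
  have hM0 : 0 < M := by linarith
  have hineq : (N : ℝ) + l ^ m + α.ncard * l ^ m / M ≤ l ^ (m + 1) := by
    have h1 : α.ncard * l ^ m / gap ≤ M := le_max_right _ _
    rw [div_le_iff₀ hgap0] at h1
    have : α.ncard * l ^ m / M ≤ gap := by rw [div_le_iff₀ hM0]; linarith
    linarith
  -- the cover of the recurrent set by cylinders
  have hcovR : Cov T α (recurrentSet T) (m + 1) N := by
    have h1 : ∀ B : Set (recurrentSet T), ∃ A' : Set X, B ∈ β → A' ∈ α ∧ B ⊆ Subtype.val ⁻¹' A' := by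
      intro B
      by_cases hB : B ∈ β
      · obtain ⟨A', hA', rfl⟩ := hB
        exact ⟨A', fun _ => ⟨hA', subset_rfl⟩⟩
      · exact ⟨∅, fun h => absurd h hB⟩
    choose e he using h1
    exact (cov_coverNum TR (m + 1) hβf hβne hβc).of_restrict hM e he
  obtain ⟨W, hW1, hW2, hW3⟩ := hcovR
  let U : Set X := ⋃ w ∈ W, ⋂ i ∈ Finset.range (m + 1), T^[i] ⁻¹' w i
  have hUmem : ∀ x, x ∈ U ↔ ∃ w ∈ W, ∀ i < m + 1, T^[i] x ∈ w i := by
    intro x; simp [U]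
  have hUo : IsOpen U := by
    refine isOpen_biUnion fun w hw => isOpen_biInter_finset fun i _ => ?_
    exact (hα.2.1 _ (hW1 w hw i)).preimage (hT.iterate i)
  have hRU : recurrentSet T ⊆ U := fun x hx => (hUmem x).2 (hW2 x hx)
  have hUc : Cov T α U (m + 1) N := ⟨W, hW1, fun x hx => (hUmem x).1 hx, hW3⟩
  obtain ⟨C, hC⟩ : ∃ C : Set X, C = K \ U := ⟨_, rfl⟩
  have hCc : IsCompact C := hC ▸ hK.diff hUo
  have hCR : C ⊆ (recurrentSet T)ᶜ := fun x hx hxR => (hC ▸ hx : x ∈ K \ U).2 (hRU hxR)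
  have hcov : ∀ x, x ∈ U ∨ x ∈ C ∨ x ∈ A := by
    intro x
    by_cases h1 : x ∈ U
    · exact Or.inl h1
    · by_cases h2 : x ∈ K
      · exact Or.inr (Or.inl (hC ▸ ⟨h2, h1⟩))
      · exact Or.inr (Or.inr (hKA h2))
  set δ := (s - r) / 2 with hδ
  have hδ0 : 0 < δ := by rw [hδ]; linarith
  have hlogM : 0 ≤ Real.log M := Real.log_nonneg hM1
  set ε := δ / (Real.log M + 1) with hε
  have hε0 : 0 < ε := by positivity
  have hεM : ε * Real.log M ≤ δ := by
    rw [hε, div_mul_eq_mul_div, div_le_iff₀ (by positivity)]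
    nlinarith
  obtain ⟨n₀, hn₀⟩ := density_zero T hT C hCc hCR ε hε0
  obtain ⟨n₁, hn₁⟩ := exists_nat_gt ((m + 1 : ℕ) * r / δ)
  refine limsup_le_of_le (by isBoundedDefault) ?_
  filter_upwards [eventually_ge_atTop n₀, eventually_ge_atTop n₁, eventually_ge_atTop 1]
    with n h0 h1 h2
  have hnpos : (0 : ℝ) < n := by exact_mod_cast h2
  have key := cov_rec T hα.1 hα.2.2.1 m U C A N l M hUc hA hcov hl1 hM1 hineq
    (n + (m + 1)) ⌊ε * n⌋₊
  rw [Nat.add_sub_cancel] at key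
  have hnum := coverNum_le_of_cov (key.mono (S' := univ) (fun x _ => by
    show Nat.count _ _ ≤ _
    rw [Nat.count_eq_card_filter_range]
    exact Nat.le_floor (hn₀ n h0 x)) le_rfl)
  have hlog : Real.log (coverNum (coverIter T α n)) ≤ n * s := by
    have hpos : 0 ≤ (n : ℝ) * s := by
      have : 0 < s := by linarith
      positivity
    rcases Nat.eq_zero_or_pos (coverNum (coverIter T α n)) with hz | hz
    · rw [hz]; simpa using hpos
    have h3 := Real.log_le_log (by exact_mod_cast hz) hnum
    rw [Real.log_mul (by positivity) (by positivity), Real.log_pow, Real.log_pow, hl,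
      Real.log_exp] at h3
    have h4 : (⌊ε * n⌋₊ : ℝ) * Real.log M ≤ ε * n * Real.log M :=
      mul_le_mul_of_nonneg_right (Nat.floor_le (by positivity)) hlogM
    have h5 : ((m + 1 : ℕ) : ℝ) * r ≤ n * δ := by
      rw [div_lt_iff₀ hδ0] at hn₁
      refine hn₁.le.trans (mul_le_mul_of_nonneg_right (by exact_mod_cast h1) hδ0.le)
    have h6 : n * (ε * Real.log M) ≤ n * δ := mul_le_mul_of_nonneg_left hεM hnpos.le
    have h7 : (n : ℝ) * s = n * r + n * δ + n * δ := by rw [hδ]; ring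
    rw [h7]
    have h8 : ((n + (m + 1) : ℕ) : ℝ) * r = n * r + (m + 1 : ℕ) * r := by push_cast; ring
    rw [h8] at h3
    linarith
  have : Real.log (coverNum (coverIter T α n)) / n ≤ s := by
    rw [div_le_iff₀ hnpos]; linarith
  exact_mod_cast this

lemma admissible_restrict {X : Type*} [TopologicalSpace X] {R : Set X} (hR : IsClosed R)
    {α : Set (Set X)} (hα : IsAdmissibleCover α) :
    IsAdmissibleCover ((fun A => (Subtype.val ⁻¹' A : Set R)) '' α) := by
  have hemb := hR.isClosedEmbedding_subtypeVal
  refine ⟨hα.1.image _, ?_, ?_, ?_⟩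
  · rintro _ ⟨A, hA, rfl⟩
    exact (hα.2.1 A hA).preimage continuous_subtype_val
  · refine eq_univ_of_forall fun y => ?_
    have hy' : (y : X) ∈ ⋃₀ α := hα.2.2.1 ▸ mem_univ _
    obtain ⟨B, hB, hyB⟩ := hy'
    exact ⟨_, mem_image_of_mem _ hB, hyB⟩
  · rintro _ ⟨A, hA, rfl⟩
    rcases hα.2.2.2 A hA with h | h
    · left
      refine (hemb.isCompact_preimage h).of_isClosed_subset isClosed_closure ?_
      exact closure_minimal (preimage_mono subset_closure)
        (isClosed_closure.preimage continuous_subtype_val)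
    · right
      exact hemb.isCompact_preimage h

lemma admissible_extend {X : Type*} [TopologicalSpace X] [T2Space X] [LocallyCompactSpace X]
    {R : Set X} (hR : IsClosed R) (hne : R.Nonempty)
    {β : Set (Set R)} (hβ : IsAdmissibleCover β) :
    ∃ (α : Set (Set X)), IsAdmissibleCover α ∧
      ∀ A ∈ α, ∃ B ∈ β, Subtype.val ⁻¹' A ⊆ B := by
  classical
  -- extend each element
  have hext : ∀ B : Set R, ∃ V : Set X, B ∈ β → IsOpen V ∧ Subtype.val ⁻¹' V = B ∧
      (IsCompact (closure V) ∨ IsCompact Vᶜ) ∧ (IsCompact Bᶜ → IsCompact Vᶜ) := by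
    intro B
    by_cases hB : B ∈ β
    swap
    · exact ⟨∅, fun h => absurd h hB⟩
    by_cases hcc : IsCompact Bᶜ
    · have hc : IsCompact (Subtype.val '' Bᶜ : Set X) := hcc.image continuous_subtype_val
      refine ⟨(Subtype.val '' Bᶜ)ᶜ, fun _ => ⟨hc.isClosed.isOpen_compl, ?_, ?_, ?_⟩⟩
      · rw [preimage_compl, preimage_image_eq _ Subtype.val_injective, compl_compl]
      · right; rwa [compl_compl]
      · intro _; rwa [compl_compl]
    · have hcl := (hβ.2.2.2 B hB).resolve_right hcc
      obtain ⟨V, hV, hVB⟩ := isOpen_induced_iff.1 (hβ.2.1 B hB)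
      have hc : IsCompact (Subtype.val '' closure B : Set X) := hcl.image continuous_subtype_val
      obtain ⟨O, hO, hsub, -, hOc⟩ :=
        exists_open_between_and_isCompact_closure hc isOpen_univ (subset_univ _)
      refine ⟨V ∩ O, fun _ => ⟨hV.inter hO, ?_, ?_, fun h => absurd h hcc⟩⟩
      · rw [preimage_inter, hVB]
        refine inter_eq_left.2 fun y hy => ?_
        exact hsub (mem_image_of_mem _ (subset_closure hy))
      · left
        exact hOc.of_isClosed_subset isClosed_closure (closure_mono inter_subset_right)
  choose V hV using hext
  obtain ⟨x₀, hx₀⟩ := hne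
  have hB₀ : (⟨x₀, hx₀⟩ : R) ∈ ⋃₀ β := hβ.2.2.1 ▸ mem_univ _
  obtain ⟨B₀, hB₀, -⟩ := hB₀
  have hRV : ∀ x ∈ R, ∃ B ∈ β, x ∈ V B := by
    intro x hx
    have h : (⟨x, hx⟩ : R) ∈ ⋃₀ β := hβ.2.2.1 ▸ mem_univ _
    obtain ⟨B, hB, hxB⟩ := h
    refine ⟨B, hB, ?_⟩
    rw [← (hV B hB).2.1] at hxB
    exact hxB
  -- the extra set
  obtain ⟨E, hEo, hER, hEc, hEcov⟩ : ∃ E : Set X, IsOpen E ∧ E ⊆ Rᶜ ∧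
      (IsCompact (closure E) ∨ IsCompact Eᶜ) ∧ ∀ x, x ∈ E ∨ ∃ B ∈ β, x ∈ V B := by
    by_cases h : ∃ B ∈ β, IsCompact Bᶜ
    · obtain ⟨B, hB, hBc⟩ := h
      have hVc := (hV B hB).2.2.2 hBc
      have hop : IsOpen (⋃ B ∈ β, V B) := isOpen_biUnion fun B hB => (hV B hB).1
      have hc : IsCompact ((V B)ᶜ \ ⋃ B ∈ β, V B) := hVc.diff hop
      obtain ⟨O, hO, hsub, hOR, hOc⟩ :=
        exists_open_between_and_isCompact_closure hc hR.isOpen_compl (fun x hx hxR => by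
          obtain ⟨B', hB', hxB'⟩ := hRV x hxR
          exact hx.2 (mem_biUnion hB' hxB'))
      refine ⟨O, hO, subset_closure.trans hOR, Or.inl hOc, fun x => ?_⟩
      by_cases hx : ∃ B ∈ β, x ∈ V B
      · exact Or.inr hx
      · left
        apply hsub
        refine ⟨fun hxB => hx ⟨B, hB, hxB⟩, fun hxU => hx ?_⟩
        simpa using hxU
    · push Not at h
      have hcl : ∀ B ∈ β, IsCompact (closure B) := fun B hB =>
        (hβ.2.2.2 B hB).resolve_right (h B hB)
      have hK := hβ.1.isCompact_biUnion hcl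
      have hKu : (⋃ B ∈ β, closure B) = univ := by
        refine eq_univ_of_forall fun y => ?_
        have hy' : y ∈ ⋃₀ β := hβ.2.2.1 ▸ mem_univ y
        obtain ⟨B, hB, hyB⟩ := hy'
        exact mem_biUnion hB (subset_closure hyB)
      rw [hKu] at hK
      have hRc : IsCompact R := isCompact_iff_isCompact_univ.2 hK
      refine ⟨Rᶜ, hR.isOpen_compl, subset_rfl, Or.inr (by rwa [compl_compl]), fun x => ?_⟩
      by_cases hx : x ∈ R
      · exact Or.inr (hRV x hx)
      · exact Or.inl hx
  refine ⟨insert E (V '' β), ⟨(hβ.1.image V).insert E, ?_, ?_, ?_⟩, ?_⟩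
  · rintro A (rfl | ⟨B, hB, rfl⟩)
    · exact hEo
    · exact (hV B hB).1
  · refine eq_univ_of_forall fun x => ?_
    rcases hEcov x with h | ⟨B, hB, h⟩
    · exact ⟨E, mem_insert _ _, h⟩
    · exact ⟨V B, mem_insert_of_mem _ (mem_image_of_mem V hB), h⟩
  · rintro A (rfl | ⟨B, hB, rfl⟩)
    · exact hEc
    · exact (hV B hB).2.2.1
  · rintro A (rfl | ⟨B, hB, rfl⟩)
    · exact ⟨B₀, hB₀, fun y hy => absurd y.2 (hER hy)⟩
    · exact ⟨B, hB, (hV B hB).2.1.le⟩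

lemma coverEntropyOf_of_isEmpty {X : Type*} [IsEmpty X] (T : X → X) (α : Set (Set X)) :
    coverEntropyOf T α = 0 := by
  have : ∀ n, coverNum (coverIter T α n) = 0 := fun n => by
    refine Nat.le_zero.1 (Nat.sInf_le ⟨∅, empty_subset _, finite_empty, ?_, by simp⟩)
    exact Subsingleton.elim _ _
  simp [coverEntropyOf, this]

lemma topEntropy_nonneg {X : Type*} [TopologicalSpace X] (T : X → X) : 0 ≤ topEntropy T := by
  refine (coverEntropyOf_nonneg T {univ}).trans (le_iSup₂_of_le {univ} ?_ le_rfl)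
  exact ⟨finite_singleton _, by simp, by simp, by simp⟩

lemma topEntropy_restrict {X : Type*} [TopologicalSpace X] [T2Space X]
    [LocallyCompactSpace X] [SecondCountableTopology X]
    [MeasurableSpace X] [BorelSpace X]
    (T : X → X) (hT : Continuous T) (hR : IsClosed (recurrentSet T))
    (hM : MapsTo T (recurrentSet T) (recurrentSet T)) :
    topEntropy T = topEntropy (hM.restrict T _ _) := by
  apply le_antisymm
  · refine iSup₂_le fun α hα => ?_
    rcases isEmpty_or_nonempty X with hX | hX
    · rw [coverEntropyOf_of_isEmpty]; exact topEntropy_nonneg _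
    · exact (coverEntropy_upper T hT hM α hα).trans
        (le_iSup₂_of_le _ (admissible_restrict hR hα) le_rfl)
  · refine iSup₂_le fun β hβ => ?_
    rcases (recurrentSet T).eq_empty_or_nonempty with he | hne
    · have : IsEmpty (recurrentSet T) := isEmpty_coe_sort.2 he
      rw [coverEntropyOf_of_isEmpty]; exact topEntropy_nonneg _
    · obtain ⟨α, hα, h⟩ := admissible_extend hR hne hβ
      refine le_trans ?_ (le_iSup₂_of_le α hα le_rfl)
      refine coverEntropyOf_le_of_le _ _ _ _ fun n => ?_
      obtain ⟨x, hx⟩ := hne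
      have hx' : x ∈ ⋃₀ α := hα.2.2.1 ▸ mem_univ x
      obtain ⟨A₀, hA₀, -⟩ := hx'
      have h1 : ∀ A : Set X, ∃ B : Set (recurrentSet T), A ∈ α → B ∈ β ∧ Subtype.val ⁻¹' A ⊆ B := by
        intro A
        by_cases hA : A ∈ α
        · obtain ⟨B, hB⟩ := h A hA
          exact ⟨B, fun _ => hB⟩
        · exact ⟨∅, fun h => absurd h hA⟩
      choose e he using h1
      exact_mod_cast coverNum_le_of_cov
        ((cov_coverNum T n hα.1 ⟨A₀, hA₀⟩ hα.2.2.1).restrict hM e he)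

lemma coverIter_pairwiseDisjoint {X : Type*} (T : X → X) {𝒜 : Set (Set X)}
    (h : 𝒜.PairwiseDisjoint id) (n : ℕ) {B B' : Set X} (hB : B ∈ coverIter T 𝒜 n)
    (hB' : B' ∈ coverIter T 𝒜 n) {x : X} (hx : x ∈ B) (hx' : x ∈ B') : B = B' := by
  obtain ⟨A, hA, rfl⟩ := hB
  obtain ⟨A', hA', rfl⟩ := hB'
  have : A = A' := by
    funext i
    by_contra hne
    exact (Set.disjoint_left.1 (h (hA i) (hA' i) hne) (mem_iInter.1 hx i)) (mem_iInter.1 hx' i)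
  rw [this]

lemma coverIter_restrict {X : Type*} (T : X → X) {R : Set X} (hM : MapsTo T R R)
    (𝒜 : Set (Set X)) (n : ℕ) :
    coverIter (hM.restrict T R R) ((fun A => (Subtype.val ⁻¹' A : Set R)) '' 𝒜) n =
      (fun A => (Subtype.val ⁻¹' A : Set R)) '' coverIter T 𝒜 n := by
  have key : ∀ A : Fin n → Set X, (Subtype.val ⁻¹' (⋂ i : Fin n, T^[i.val] ⁻¹' A i) : Set R) =
      ⋂ i : Fin n, (hM.restrict T R R)^[i.val] ⁻¹' (Subtype.val ⁻¹' A i) := by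
    intro A
    ext y
    simp only [mem_preimage, mem_iInter, restrict_iterate_val]
  ext B
  constructor
  · rintro ⟨A, hA, rfl⟩
    choose A' hA' hAA using hA
    refine ⟨_, ⟨A', hA', rfl⟩, ?_⟩
    dsimp only
    rw [key]
    simp only [hAA]
  · rintro ⟨_, ⟨A, hA, rfl⟩, rfl⟩
    exact ⟨fun i => Subtype.val ⁻¹' A i, fun i => ⟨_, hA i, rfl⟩, key A⟩

lemma measPartEntropy_restrict {X : Type*} [MeasurableSpace X] (T : X → X) {R : Set X}
    (hM : MapsTo T R R) (hR : MeasurableSet R) (μ : Measure X) (hμ : μ Rᶜ = 0)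
    {𝒜 : Set (Set X)} (h : 𝒜.PairwiseDisjoint id) :
    measPartEntropy T μ 𝒜 = measPartEntropy (hM.restrict T R R) (μ.comap Subtype.val)
      ((fun A => (Subtype.val ⁻¹' A : Set R)) '' 𝒜) := by
  unfold measPartEntropy
  congr 1
  funext n
  congr 2
  unfold partStatic
  have hval : ∀ B : Set X, (μ.comap (Subtype.val : R → X)) (Subtype.val ⁻¹' B) = μ B := by
    intro B
    rw [(MeasurableEmbedding.subtype_coe hR).comap_apply, Subtype.image_preimage_coe, inter_comm]
    exact measure_inter_conull hμ
  rw [coverIter_restrict, finsum_mem_image']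
  · simp only [hval]
  · rintro B ⟨hB, hBs⟩ B' ⟨hB', -⟩ hEq
    have hne : (Subtype.val ⁻¹' B : Set R).Nonempty := by
      rw [nonempty_iff_ne_empty]
      intro h0
      simp [h0] at hBs
    obtain ⟨y, hy⟩ := hne
    have hy' : y ∈ (Subtype.val ⁻¹' B' : Set R) := by
      dsimp only at hEq
      rw [← hEq]; exact hy
    exact coverIter_pairwiseDisjoint T h n hB hB' hy hy'

lemma measEntropy_restrict {X : Type*} [MeasurableSpace X] (T : X → X) {R : Set X}
    (hM : MapsTo T R R) (hR : MeasurableSet R) (μ : Measure X) [IsProbabilityMeasure μ]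
    (hμ : μ Rᶜ = 0) :
    measEntropy T μ = measEntropy (hM.restrict T R R) (μ.comap Subtype.val) := by
  classical
  apply le_antisymm
  · refine iSup₂_le fun 𝒜 h𝒜 => ?_
    rw [measPartEntropy_restrict T hM hR μ hμ h𝒜.2.2.1]
    refine le_iSup₂_of_le _ ⟨h𝒜.1.image _, ?_, ?_, ?_⟩ le_rfl
    · rintro _ ⟨A, hA, rfl⟩
      exact measurable_subtype_coe (h𝒜.2.1 A hA)
    · rintro _ ⟨A, hA, rfl⟩ _ ⟨A', hA', rfl⟩ hne
      have : A ≠ A' := fun h => hne (by rw [h])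
      exact (h𝒜.2.2.1 hA hA' this).preimage _
    · refine eq_univ_of_forall fun y => ?_
      have hy' : (y : X) ∈ ⋃₀ 𝒜 := h𝒜.2.2.2 ▸ mem_univ _
      obtain ⟨B, hB, hyB⟩ := hy'
      exact ⟨_, mem_image_of_mem _ hB, hyB⟩
  · refine iSup₂_le fun ℬ hℬ => ?_
    have hne : R.Nonempty := by
      rw [nonempty_iff_ne_empty]
      rintro rfl
      simp at hμ
    obtain ⟨p, hp⟩ := hne
    let r : X → R := fun x => if h : x ∈ R then ⟨x, h⟩ else ⟨p, hp⟩
    have hr : Measurable r := by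
      refine Measurable.dite (s := R) measurable_id measurable_const hR
    have hrv : ∀ y : R, r y = y := fun y => by simp [r]
    have himg : (fun A => (Subtype.val ⁻¹' A : Set R)) '' ((fun B => r ⁻¹' B) '' ℬ) = ℬ := by
      rw [image_image]
      have : ∀ B : Set R, (Subtype.val ⁻¹' (r ⁻¹' B) : Set R) = B := fun B => by
        ext y; simp [hrv]
      simp [this]
    have hdis : ((fun B => r ⁻¹' B) '' ℬ).PairwiseDisjoint id := by
      rintro _ ⟨A, hA, rfl⟩ _ ⟨A', hA', rfl⟩ hne
      have : A ≠ A' := fun h => hne (by rw [h])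
      exact (hℬ.2.2.1 hA hA' this).preimage _
    have := measPartEntropy_restrict T hM hR μ hμ hdis
    rw [himg] at this
    rw [← this]
    refine le_iSup₂_of_le _ ⟨hℬ.1.image _, ?_, hdis, ?_⟩ le_rfl
    · rintro _ ⟨A, hA, rfl⟩
      exact hr (hℬ.2.1 A hA)
    · refine eq_univ_of_forall fun y => ?_
      have hy' : r y ∈ ⋃₀ ℬ := hℬ.2.2.2 ▸ mem_univ _
      obtain ⟨B, hB, hyB⟩ := hy'
      exact ⟨_, mem_image_of_mem _ hB, hyB⟩

/-- if the recurrent set `R(T)` of a continuous map on a locally compact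
separable metrizable space is closed, then every `T`-invariant Borel probability has
`h_μ(T) = h_μ(T|_{R(T)})`, and consequently `h(T) = h(T|_{R(T)})`. -/
theorem entropy_eq_entropy_restrict_recurrentSet {X : Type*} [TopologicalSpace X]
    [LocallyCompactSpace X] [TopologicalSpace.SeparableSpace X]
    [TopologicalSpace.MetrizableSpace X] [MeasurableSpace X] [BorelSpace X]
    (T : X → X) (hT : Continuous T) (hR : IsClosed (recurrentSet T))
    (hM : Set.MapsTo T (recurrentSet T) (recurrentSet T)) :
    (∀ μ : Measure X, IsProbabilityMeasure μ → μ.map T = μ →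
      measEntropy T μ =
        measEntropy (Set.MapsTo.restrict T _ _ hM) (μ.comap (Subtype.val))) ∧
    topEntropy T = topEntropy (Set.MapsTo.restrict T _ _ hM) := by
  letI := TopologicalSpace.metrizableSpaceMetric X
  have : SecondCountableTopology X := UniformSpace.secondCountable_of_separable X
  refine ⟨fun μ hμ hinv => ?_, topEntropy_restrict T hT hR hM⟩
  exact measEntropy_restrict T hM hR.measurableSet μ (poincare_ae T hT μ hinv)
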